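/- The set of codes of finite term rewriting systems R (over finite signatures) such that R is strongly normalizing on every term is Π⁰₂-complete. -/

import Mathlib

/-!
The set is `Π⁰₂` because `Term.encode` is a bijection with `ℕ`, so well-formedness and the list
of all one-step reducts of a term are primitive recursive in the codes (`primrec_wfTRS`,
`primrec_step`). Rewriting is finitely branching, hence by Kőnig's lemma (`sn_iff_reducts`) a term
is strongly normalizing iff for some `k` it has no `k`-step reducts; uniform termination therefore
reads "for every term there is a `k` such that ...".

For hardness, let `n ∈ B ↔ ∀ x ∃ y, p n x y` with `p` computable. Some primitive recursive
`T(n, x, y)`, with values `0` and `1`, is nonzero for all large `y` if `∃ y, p n x y`, and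
identically `0` otherwise. It says that a fixed machine searching for a witness halts within `y`
steps (`exists_search`). A fixed
rewriting system `baseRules` interprets programs for primitive recursive functions
(`exists_computes`), and `n` is sent to this system extended by the single search rule
`go(x, y, 0) → go(x, y + 1, T(n, x, y))`. If `n ∉ B`, then for some `x` the term `go(x, 0, 0)` has
an infinite reduction (`not_sn`).

The delicate point is that for `n ∈ B` *every* term must be strongly normalizing, including open
terms and terms that do not represent computations, such as programs containing unevaluated
applications. For this each term receives a value in `ℕ` (`val`): programs denote their codes,
pairs denote `Nat.pair`, applications denote the value of the program on the argument, and the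
remaining symbols denote `0`. Each rule preserves this value (`val_rewrite`). An application is
strongly normalizing whenever its two arguments are, by induction on the values of the program and
of the argument (`sn_ap`): an interpreter step calls either a program with a smaller code or the
same program on an argument of smaller value. Likewise a search term `go(X, Y, C)` can only take a
root step if `C` has value `0`; the values of `X` and `Y` are natural numbers `x` and `y`, `x` never
changes, and `y` grows until `T(n, x, y) ≠ 0`, after which no further root step is possible
(`sn_go_aux`). All other symbols head no rule.
-/

/-- First-order terms over the fixed countably infinite set of variables
(named by naturals): a term is a variable or a function symbol (named by a
natural number) applied to a list of argument terms. -/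
inductive Term : Type
  | var : ℕ → Term
  | app : ℕ → List Term → Term

namespace Term

/-- Homomorphic application of a substitution (a map from variables to terms). -/
def subst (σ : ℕ → Term) : Term → Term
  | var n => σ n
  | app f ts => app f (ts.attach.map (fun x => subst σ x.1))
decreasing_by
  have := List.sizeOf_lt_of_mem x.2
  simp only [Term.app.sizeOf_spec]; omega

/-- An injective encoding of terms into the natural numbers. -/
def encode : Term → ℕ
  | var n => Nat.pair 0 n
  | app f ts => Nat.pair (f + 1) (Encodable.encode (ts.attach.map (fun x => encode x.1)))
decreasing_by
  have := List.sizeOf_lt_of_mem x.2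
  simp only [Term.app.sizeOf_spec]; omega

end Term

/-- `IsVarOf n t` holds iff the variable `n` occurs in the term `t`. -/
inductive IsVarOf (n : ℕ) : Term → Prop
  | var : IsVarOf n (.var n)
  | app {f : ℕ} {ts : List Term} {t : Term} : t ∈ ts → IsVarOf n t → IsVarOf n (.app f ts)

/-- A term is ground if no variable occurs in it. -/
def Ground (t : Term) : Prop := ∀ n : ℕ, ¬ IsVarOf n t

/-- A (finite) signature is presented by a finite list of pairs
(function symbol, arity); `WFSig` states that each symbol has a unique arity. -/
def WFSig (sig : List (ℕ × ℕ)) : Prop :=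
  ∀ p ∈ sig, ∀ q ∈ sig, p.1 = q.1 → p.2 = q.2

/-- `WFTerm sig t`: `t` is a term over the signature `sig`, i.e. every function
symbol occurring in `t` belongs to `sig` and is applied to the correct number
of arguments. -/
inductive WFTerm (sig : List (ℕ × ℕ)) : Term → Prop
  | var (n : ℕ) : WFTerm sig (.var n)
  | app {f : ℕ} {ts : List Term} : (f, ts.length) ∈ sig →
      (∀ t ∈ ts, WFTerm sig t) → WFTerm sig (.app f ts)

/-- `WFTRS sig R`: the finite list of rules `R` is a term rewriting system over
the signature `sig`: `sig` assigns unique arities, both sides of every rule are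
terms over `sig`, no left-hand side is a variable, and every variable occurring
in a right-hand side occurs in the corresponding left-hand side. -/
def WFTRS (sig : List (ℕ × ℕ)) (R : List (Term × Term)) : Prop :=
  WFSig sig ∧ ∀ p ∈ R, WFTerm sig p.1 ∧ WFTerm sig p.2 ∧
    (∀ n : ℕ, p.1 ≠ .var n) ∧ (∀ n : ℕ, IsVarOf n p.2 → IsVarOf n p.1)

/-- The one-step rewrite relation `→_R` of a TRS `R`: application of a rule
under a substitution, closed under arbitrary one-hole contexts (i.e. embedded
at any argument position at any depth). -/
inductive Rewrite (R : List (Term × Term)) : Term → Term → Prop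
  | rule (l r : Term) (σ : ℕ → Term) (h : (l, r) ∈ R) :
      Rewrite R (l.subst σ) (r.subst σ)
  | congr (f : ℕ) (ts₁ ts₂ : List Term) (t t' : Term) (h : Rewrite R t t') :
      Rewrite R (.app f (ts₁ ++ t :: ts₂)) (.app f (ts₁ ++ t' :: ts₂))

/-- Many-step rewriting `→*_R` (reflexive-transitive closure of `→_R`). -/
def Reduces (R : List (Term × Term)) : Term → Term → Prop :=
  Relation.ReflTransGen (Rewrite R)

/-- `t` is a normal form of `R` (admits no `→_R`-step). -/
def NormalForm (R : List (Term × Term)) (t : Term) : Prop := ∀ u : Term, ¬ Rewrite R t u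

/-- `R` is strongly normalizing (terminating) on `t`:
no infinite rewrite sequence starts at `t`. -/
def SNon (R : List (Term × Term)) (t : Term) : Prop :=
  ¬ ∃ f : ℕ → Term, f 0 = t ∧ ∀ n : ℕ, Rewrite R (f n) (f (n + 1))

/-- `R` is weakly normalizing on `t`: some reduction from `t` ends in a normal form. -/
def WNon (R : List (Term × Term)) (t : Term) : Prop :=
  ∃ s : Term, Reduces R t s ∧ NormalForm R s

/-- `R` is confluent (Church-Rosser) on `t`. -/
def CRon (R : List (Term × Term)) (t : Term) : Prop :=
  ∀ t₁ t₂ : Term, Reduces R t t₁ → Reduces R t t₂ →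
    ∃ d : Term, Reduces R t₁ d ∧ Reduces R t₂ d

/-- `R` is weakly confluent (weakly Church-Rosser) on `t`. -/
def WCRon (R : List (Term × Term)) (t : Term) : Prop :=
  ∀ t₁ t₂ : Term, Rewrite R t t₁ → Rewrite R t t₂ →
    ∃ d : Term, Reduces R t₁ d ∧ Reduces R t₂ d

/-- A root step `s →_{R,ε} t`: `s = ℓσ` and `t = rσ` for some rule `ℓ → r` of `R`. -/
def RootStep (R : List (Term × Term)) (s t : Term) : Prop :=
  ∃ (l r : Term) (σ : ℕ → Term), (l, r) ∈ R ∧ s = l.subst σ ∧ t = r.subst σ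

/-- Code of a rewrite rule. -/
def encodeRule (p : Term × Term) : ℕ := Nat.pair p.1.encode p.2.encode

/-- Code of a finite TRS. -/
def encodeTRS (R : List (Term × Term)) : ℕ := Encodable.encode (R.map encodeRule)

/-- Code of a finite signature. -/
def encodeSig (sig : List (ℕ × ℕ)) : ℕ := Encodable.encode sig

/-- A set `A ⊆ ℕ` is Σ⁰₁ (recursively enumerable) if it is the domain of a
partial computable function. -/
def Sigma01 (A : Set ℕ) : Prop :=
  ∃ f : ℕ →. ℕ, Nat.Partrec f ∧ ∀ n : ℕ, n ∈ A ↔ (f n).Dom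

/-- `B` is many-one reducible to `A`: there is a total computable `g` with
`n ∈ B ↔ g n ∈ A` for all `n`. -/
def ManyOneRed (B A : Set ℕ) : Prop :=
  ∃ g : ℕ → ℕ, Computable g ∧ ∀ n : ℕ, n ∈ B ↔ g n ∈ A

/-- `A` is Σ⁰₁-complete. -/
def Sigma01Complete (A : Set ℕ) : Prop :=
  Sigma01 A ∧ ∀ B : Set ℕ, Sigma01 B → ManyOneRed B A

/-- A set `A ⊆ ℕ` is Π⁰₂ if there is a decidable (computable) predicate
`P ⊆ ℕ³` with `n ∈ A ↔ ∀ x ∃ y, P n x y`. -/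
def Pi02 (A : Set ℕ) : Prop :=
  ∃ p : ℕ → ℕ → ℕ → Bool,
    Computable (fun x : ℕ × ℕ × ℕ => p x.1 x.2.1 x.2.2) ∧
    ∀ n : ℕ, n ∈ A ↔ ∀ x : ℕ, ∃ y : ℕ, p n x y = true

/-- `A` is Π⁰₂-complete. -/
def Pi02Complete (A : Set ℕ) : Prop :=
  Pi02 A ∧ ∀ B : Set ℕ, Pi02 B → ManyOneRed B A

/-- A set `A ⊆ ℕ` is Π¹₁ if there is a decidable (computable) predicate
`P ⊆ ℕ²` such that `n ∈ A` iff for every function `α : ℕ → ℕ` there exists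
`k` with `P n ⟨α 0, …, α (k-1)⟩`, where `⟨·⟩` is the (computable) coding of
finite sequences of naturals. -/
def Pi11 (A : Set ℕ) : Prop :=
  ∃ p : ℕ → ℕ → Bool,
    Computable (fun x : ℕ × ℕ => p x.1 x.2) ∧
    ∀ n : ℕ, n ∈ A ↔ ∀ α : ℕ → ℕ, ∃ k : ℕ,
      p n (Encodable.encode (List.ofFn (fun i : Fin k => α i))) = true

/-- `A` is Π¹₁-complete. -/
def Pi11Complete (A : Set ℕ) : Prop :=
  Pi11 A ∧ ∀ B : Set ℕ, Pi11 B → ManyOneRed B A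

namespace SNPi

open Encodable Denumerable

/-! ### Coding of terms -/

theorem subst_app (σ : ℕ → Term) (f : ℕ) (ts : List Term) :
    (Term.app f ts).subst σ = .app f (ts.map (Term.subst σ)) := by
  rw [Term.subst, List.attach_map_val]

@[simp] theorem subst_var (σ : ℕ → Term) (n : ℕ) : (Term.var n).subst σ = σ n := by
  rw [Term.subst]

theorem term_ind {P : Term → Prop} (hv : ∀ n, P (.var n))
    (ha : ∀ f ts, (∀ t ∈ ts, P t) → P (.app f ts)) (t : Term) : P t := by
  induction hn : sizeOf t using Nat.strong_induction_on generalizing t with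
  | _ k ih =>
    cases t with
    | var n => exact hv n
    | app f ts =>
      refine ha f ts fun t ht => ih (sizeOf t) ?_ t rfl
      have := List.sizeOf_lt_of_mem ht
      simp only [Term.app.sizeOf_spec] at hn
      omega

theorem encode_list_map {α : Type*} [Encodable α] (l : List α) :
    encode (l.map (encode : α → ℕ)) = encode l := by
  induction l with
  | nil => rfl
  | cons a l ih => simp [ih]

theorem mem_lt_encode {l : List ℕ} {a : ℕ} (h : a ∈ l) : a < encode l := by
  induction l with
  | nil => simp at h
  | cons b l ih =>
    simp only [encode_list_cons, encode_nat, Nat.lt_succ_iff]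
    rcases List.mem_cons.1 h with rfl | h
    · exact Nat.left_le_pair _ _
    · exact (ih h).le.trans (Nat.right_le_pair _ _)

/-- The inverse of `Term.encode`. -/
def decodeTerm (n : ℕ) : Term :=
  if n.unpair.1 = 0 then .var n.unpair.2
  else .app (n.unpair.1 - 1)
    ((ofNat (List ℕ) n.unpair.2).attach.map fun x => decodeTerm x.1)
termination_by n
decreasing_by
  have := mem_lt_encode x.2
  rw [encode_ofNat] at this
  exact this.trans_le (Nat.unpair_right_le n)

theorem decodeTerm_eq (n : ℕ) : decodeTerm n =
    if n.unpair.1 = 0 then .var n.unpair.2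
    else .app (n.unpair.1 - 1) ((ofNat (List ℕ) n.unpair.2).map decodeTerm) := by
  conv_lhs => rw [decodeTerm]
  rw [List.attach_map_val]

theorem encode_var (n : ℕ) : (Term.var n).encode = Nat.pair 0 n := by
  rw [Term.encode]

theorem encode_app (f : ℕ) (ts : List Term) :
    (Term.app f ts).encode = Nat.pair (f + 1) (encode (ts.map Term.encode)) := by
  rw [Term.encode, List.attach_map_val]

theorem decodeTerm_encode (t : Term) : decodeTerm t.encode = t := by
  induction t using term_ind with
  | hv n => rw [encode_var, decodeTerm_eq]; simp
  | ha f ts ih =>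
    rw [encode_app, decodeTerm_eq]
    simp only [Nat.unpair_pair, Nat.add_eq_zero_iff, one_ne_zero, and_false, if_false,
      Nat.add_sub_cancel, ofNat_encode, List.map_map]
    congr 1
    conv_rhs => rw [← List.map_id ts]
    exact List.map_congr_left fun t ht => ih t ht

theorem encode_decodeTerm (n : ℕ) : (decodeTerm n).encode = n := by
  induction n using Nat.strong_induction_on with
  | _ n ih =>
    rw [decodeTerm_eq]
    split_ifs with h
    · rw [encode_var, ← h, Nat.pair_unpair]
    · rw [encode_app, List.map_map, Nat.sub_add_cancel (Nat.pos_of_ne_zero h)]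
      have : (ofNat (List ℕ) n.unpair.2).map (Term.encode ∘ decodeTerm)
          = ofNat (List ℕ) n.unpair.2 := by
        conv_rhs => rw [← List.map_id (ofNat (List ℕ) n.unpair.2)]
        refine List.map_congr_left fun m hm => ih m ?_
        have := mem_lt_encode hm
        rw [encode_ofNat] at this
        exact this.trans_le (Nat.unpair_right_le n)
      rw [this, encode_ofNat, Nat.pair_unpair]

/-- Coding of terms is a bijection with the natural numbers. -/
def termEquiv : Term ≃ ℕ := ⟨Term.encode, decodeTerm, decodeTerm_encode, encode_decodeTerm⟩

instance : Denumerable Term := Denumerable.mk' termEquiv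

theorem encode_term (t : Term) : encode t = t.encode := rfl

theorem ofNat_term (n : ℕ) : ofNat Term n = decodeTerm n := by
  apply encode_injective
  rw [encode_ofNat, encode_term, encode_decodeTerm]

instance : DecidableEq Term := Encodable.decidableEqOfEncodable Term

instance : Inhabited Term := ⟨.var 0⟩

theorem primrec_app : Primrec₂ Term.app := by
  refine Primrec.encode_iff.1 ((Primrec₂.natPair.comp (Primrec.succ.comp .fst)
    (Primrec.encode.comp .snd)).of_eq fun x => ?_)
  change _ = (Term.app x.1 x.2).encode
  rw [encode_app, show x.2.map Term.encode = x.2.map encode from rfl, encode_list_map]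

theorem primrec_var : Primrec Term.var :=
  Primrec.encode_iff.1 ((Primrec₂.natPair.comp (.const 0) .id).of_eq fun n =>
    (encode_var n).symm)

/-- Structural recursion on terms, with parameters, stays within the primitive recursive
functions: arguments of a term have smaller codes, so this is course-of-values recursion. -/
theorem primrec_term_rec {α σ : Type} [Primcodable α] [Primcodable σ] [Inhabited σ]
    {F : α → Term → σ} {V : α → ℕ → σ} {G : α → ℕ × List Term × List σ → σ}
    (hV : Primrec₂ V) (hG : Primrec₂ G) (hv : ∀ a n, F a (.var n) = V a n)
    (ha : ∀ a f ts, F a (.app f ts) = G a (f, ts, ts.map (F a))) : Primrec₂ F := by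
  have key : Primrec₂ (fun a n => F a (ofNat Term n)) := by
    refine Primrec.nat_strong_rec _ (g := fun a hist =>
      some (if hist.length.unpair.1 = 0 then V a hist.length.unpair.2
        else G a (hist.length.unpair.1 - 1,
          (ofNat (List ℕ) hist.length.unpair.2).map (ofNat Term),
          (ofNat (List ℕ) hist.length.unpair.2).map fun m => hist.getD m default))) ?_ ?_
    · have hl : Primrec (fun p : α × List σ => p.2.length.unpair) :=
        Primrec.unpair.comp (Primrec.list_length.comp .snd)
      have hd : Primrec (fun p : α × List σ => ofNat (List ℕ) p.2.length.unpair.2) :=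
        (Primrec.ofNat _).comp (Primrec.snd.comp hl)
      refine Primrec.option_some.comp (Primrec.ite ?_ ?_ ?_)
      · exact Primrec.eq.comp (Primrec.fst.comp hl) (.const 0)
      · exact hV.comp .fst (Primrec.snd.comp hl)
      · refine hG.comp .fst (Primrec.pair (Primrec.pred.comp (Primrec.fst.comp hl))
          (Primrec.pair ?_ ?_))
        · exact Primrec.list_map hd ((Primrec.ofNat _).comp .snd)
        · exact Primrec.list_map hd ((Primrec.list_getD default).comp
            (Primrec.snd.comp .fst) .snd)
    · intro a n
      simp only [List.length_map, List.length_range, Option.some.injEq]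
      rw [ofNat_term, decodeTerm_eq]
      split_ifs with h
      · exact (hv _ _).symm
      · rw [ha, List.map_map]
        congr 3
        refine List.map_congr_left fun m hm => ?_
        have : m < n := by
          have := mem_lt_encode hm
          rw [encode_ofNat] at this
          exact this.trans_le (Nat.unpair_right_le n)
        simp [this, ofNat_term]
  refine (key.comp .fst (Primrec.encode.comp .snd)).of_eq fun p => ?_
  rw [ofNat_encode]

/-! ### Deciding well-formedness and computing one-step reducts -/

/-- Structural recursion on terms. -/
def fold {σ : Type} (V : ℕ → σ) (G : ℕ → List Term → List σ → σ) : Term → σ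
  | .var n => V n
  | .app f ts => G f ts (ts.attach.map fun x => fold V G x.1)
decreasing_by
  have := List.sizeOf_lt_of_mem x.2
  simp only [Term.app.sizeOf_spec]; omega

section fold

variable {σ : Type} (V : ℕ → σ) (G : ℕ → List Term → List σ → σ)

@[simp] theorem fold_var (n : ℕ) : fold V G (.var n) = V n := by
  rw [fold]

theorem fold_app (f : ℕ) (ts : List Term) :
    fold V G (.app f ts) = G f ts (ts.map (fold V G)) := by
  rw [fold, List.attach_map_val]

end fold

/-- The list of variables occurring in a term. -/
def vars : Term → List ℕ := fold (fun n => [n]) fun _ _ rs => rs.flatten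

theorem primrec_vars : Primrec vars := by
  have : Primrec₂ (fun (_ : Unit) t => vars t) :=
    primrec_term_rec (V := fun _ n => [n]) (G := fun _ x => x.2.2.flatten)
      (Primrec.list_cons.comp .snd (.const []))
      (Primrec.list_flatten.comp (Primrec.snd.comp (Primrec.snd.comp .snd)))
      (fun _ n => fold_var _ _ n) (fun _ f ts => fold_app _ _ f ts)
  exact this.comp (.const ()) .id

theorem mem_vars {n : ℕ} {t : Term} : n ∈ vars t ↔ IsVarOf n t := by
  induction t using term_ind with
  | hv m =>
    rw [vars, fold_var, List.mem_singleton]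
    exact ⟨fun h => h ▸ .var, fun h => by cases h; rfl⟩
  | ha f ts ih =>
    rw [vars, fold_app]
    simp only [List.mem_flatten, List.mem_map, exists_exists_and_eq_and]
    constructor
    · rintro ⟨t, ht, h⟩
      exact .app ht ((ih t ht).1 h)
    · intro h
      cases h with
      | app ht h => exact ⟨_, ht, (ih _ ht).2 h⟩

/-- The Boolean test for `WFTerm`. -/
def wfTerm (sig : List (ℕ × ℕ)) : Term → Bool :=
  fold (fun _ => true) fun f ts rs =>
    decide ((∃ p ∈ sig, p = (f, ts.length)) ∧ ∀ b ∈ rs, b = true)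

theorem primrec_wfTerm : Primrec₂ wfTerm := by
  refine primrec_term_rec (V := fun _ _ => true)
    (G := fun sig x => decide ((∃ p ∈ sig, p = (x.1, x.2.1.length)) ∧ ∀ b ∈ x.2.2, b = true))
    (Primrec.const true) ?_ (fun _ n => fold_var _ _ n) (fun _ f ts => fold_app _ _ f ts)
  refine PrimrecPred.decide (PrimrecPred.and ?_ ?_)
  · have : PrimrecRel fun (p q : ℕ × ℕ) => p = q := Primrec.eq
    exact this.exists_mem_list.comp .fst (Primrec.pair (Primrec.fst.comp .snd)
      (Primrec.list_length.comp (Primrec.fst.comp (Primrec.snd.comp .snd))))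
  · have : PrimrecPred fun b : Bool => b = true := Primrec.eq.comp .id (.const true)
    exact this.forall_mem_list.comp (Primrec.snd.comp (Primrec.snd.comp .snd))

theorem wfTerm_iff {sig : List (ℕ × ℕ)} {t : Term} : wfTerm sig t = true ↔ WFTerm sig t := by
  induction t using term_ind with
  | hv m =>
    rw [wfTerm, fold_var]
    exact ⟨fun _ => .var m, fun _ => rfl⟩
  | ha f ts ih =>
    rw [wfTerm, fold_app, ← wfTerm]
    simp only [exists_eq_right, List.mem_map, forall_exists_index, and_imp,
      forall_apply_eq_imp_iff₂, decide_eq_true_eq]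
    constructor
    · rintro ⟨h1, h2⟩
      exact .app h1 fun t ht => (ih t ht).1 (h2 t ht)
    · intro h
      cases h with
      | app h1 h2 => exact ⟨h1, fun t ht => (ih t ht).2 (h2 t ht)⟩

/-- The conditions that `WFTRS` imposes on a single rule, in decidable form. The third one says
that the left-hand side is not a variable: codes of variables are the pairs `(0, n)`. -/
def wfRule (sig : List (ℕ × ℕ)) (p : Term × Term) : Prop :=
  wfTerm sig p.1 = true ∧ wfTerm sig p.2 = true ∧
    ¬ p.1.encode.unpair.1 = 0 ∧ ∀ n ∈ vars p.2, ∃ m ∈ vars p.1, m = n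

theorem wfTRS_iff {sig : List (ℕ × ℕ)} {R : List (Term × Term)} :
    WFTRS sig R ↔ (∀ p ∈ sig, ∀ q ∈ sig, p.1 = q.1 → p.2 = q.2) ∧ ∀ p ∈ R, wfRule sig p := by
  refine and_congr Iff.rfl (forall₂_congr fun p _ => ?_)
  refine and_congr wfTerm_iff.symm (and_congr wfTerm_iff.symm (and_congr ?_ ?_))
  · rcases p.1 with n | ⟨f, ts⟩
    · simp [encode_var]
    · simp [encode_app]
  · simp [mem_vars]

theorem primrec_wfTRS : PrimrecRel WFTRS := by
  refine PrimrecPred.of_eq (p := fun x : List (ℕ × ℕ) × List (Term × Term) => _) ?_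
    fun x => (wfTRS_iff (sig := x.1) (R := x.2)).symm
  refine PrimrecPred.and ?_ ?_
  · have h1 : PrimrecRel fun (p q : ℕ × ℕ) => p.1 = q.1 → p.2 = q.2 :=
      PrimrecPred.of_eq (PrimrecPred.or
        (PrimrecPred.not (Primrec.eq.comp (Primrec.fst.comp .fst) (Primrec.fst.comp .snd)))
        (Primrec.eq.comp (Primrec.snd.comp .fst) (Primrec.snd.comp .snd)))
        fun x => by simp only [imp_iff_not_or]
    have h2 : PrimrecRel fun (q : ℕ × ℕ) (l : List (ℕ × ℕ)) =>
        ∀ p ∈ l, p.1 = q.1 → p.2 = q.2 := h1.forall_mem_list.comp .snd .fst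
    have h3 := h2.forall_mem_list.comp (Primrec.fst (α := List (ℕ × ℕ))
      (β := List (Term × Term))) .fst
    exact h3.of_eq fun x => ⟨fun h p hp q hq => h q hq p hp, fun h p hp q hq => h q hq p hp⟩
  · have h1 : PrimrecRel fun (p : Term × Term) (sig : List (ℕ × ℕ)) => wfRule sig p := by
      refine PrimrecPred.and ?_ (PrimrecPred.and ?_ (PrimrecPred.and ?_ ?_))
      · exact Primrec.eq.comp (primrec_wfTerm.comp .snd (Primrec.fst.comp .fst)) (.const true)
      · exact Primrec.eq.comp (primrec_wfTerm.comp .snd (Primrec.snd.comp .fst)) (.const true)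
      · exact PrimrecPred.not (Primrec.eq.comp (Primrec.fst.comp (Primrec.unpair.comp
          (Primrec.encode.comp (Primrec.fst.comp .fst)))) (.const 0))
      · have h1 : PrimrecRel fun (m n : ℕ) => m = n := Primrec.eq
        have h2 : PrimrecRel fun (n : ℕ) (l : List ℕ) => ∃ m ∈ l, m = n :=
          h1.exists_mem_list.comp .snd .fst
        exact h2.forall_mem_list.comp (primrec_vars.comp (Primrec.snd.comp .fst))
          (primrec_vars.comp (Primrec.fst.comp .fst))
    exact h1.forall_mem_list.comp .snd .fst

/-- The substitution given by a finite list of terms. -/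
def listSubst (L : List Term) (n : ℕ) : Term := L.getD n (.var 0)

theorem primrec_subst : Primrec₂ fun L t => Term.subst (listSubst L) t :=
  primrec_term_rec (V := fun L n => listSubst L n) (G := fun _ x => .app x.1 x.2.2)
    ((Primrec.list_getD _).comp .fst .snd)
    (primrec_app.comp (Primrec.fst.comp .snd) (Primrec.snd.comp (Primrec.snd.comp .snd)))
    (fun _ _ => subst_var _ _) (fun _ _ _ => subst_app _ _ _)

/-- The list of subterms of a term. -/
def subterms : Term → List Term :=
  fold (fun n => [.var n]) fun f ts rs => .app f ts :: rs.flatten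

theorem primrec_subterms : Primrec subterms := by
  have : Primrec₂ (fun (_ : Unit) t => subterms t) :=
    primrec_term_rec (V := fun _ n => [.var n]) (G := fun _ x => .app x.1 x.2.1 :: x.2.2.flatten)
      (Primrec.list_cons.comp (primrec_var.comp .snd) (.const []))
      (Primrec.list_cons.comp
        (primrec_app.comp (Primrec.fst.comp .snd) (Primrec.fst.comp (Primrec.snd.comp .snd)))
        (Primrec.list_flatten.comp (Primrec.snd.comp (Primrec.snd.comp .snd))))
      (fun _ n => fold_var _ _ n) (fun _ f ts => fold_app _ _ f ts)
  exact this.comp (.const ()) .id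

theorem self_mem_subterms (t : Term) : t ∈ subterms t := by
  cases t with
  | var n => simp [subterms]
  | app f ts => simp [subterms, fold_app]

theorem subst_mem_subterms {σ : ℕ → Term} {n : ℕ} {t : Term} (h : IsVarOf n t) :
    σ n ∈ subterms (t.subst σ) := by
  induction h with
  | var => rw [subst_var]; exact self_mem_subterms _
  | @app f ts t ht _ ih =>
    rw [subst_app, subterms, fold_app]
    simp only [List.mem_cons, List.mem_flatten, List.mem_map]
    exact .inr ⟨_, ⟨_, ⟨t, ht, rfl⟩, rfl⟩, ih⟩

theorem subst_congr {σ τ : ℕ → Term} {t : Term} (h : ∀ n, IsVarOf n t → σ n = τ n) :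
    t.subst σ = t.subst τ := by
  induction t using term_ind with
  | hv n => simpa using h n .var
  | ha f ts ih =>
    rw [subst_app, subst_app]
    congr 1
    exact List.map_congr_left fun t ht => ih t ht fun n hn => h n (.app ht hn)

theorem le_encode_of_isVarOf {n : ℕ} {t : Term} (h : IsVarOf n t) : n ≤ t.encode := by
  induction h with
  | var => rw [encode_var]; exact Nat.right_le_pair _ _
  | @app f ts t ht _ ih =>
    rw [encode_app]
    exact ih.trans ((mem_lt_encode (List.mem_map_of_mem ht)).le.trans (Nat.right_le_pair _ _))

/-- All lists of length `k` with entries from `S`. -/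
def cands (S : List Term) (k : ℕ) : List (List Term) :=
  k.rec [[]] fun _ ih => ih.flatMap fun L => S.map fun s => s :: L

theorem primrec_cands : Primrec₂ cands := by
  refine Primrec.nat_rec (f := fun _ : List Term => [[]])
    (g := fun (S : List Term) (p : ℕ × List (List Term)) =>
      p.2.flatMap fun L => S.map fun s => s :: L) (.const _) ?_
  refine Primrec.list_flatMap (Primrec.snd.comp .snd) ?_
  exact Primrec.list_map (Primrec.fst.comp .fst)
    (Primrec.list_cons.comp .snd (Primrec.snd.comp .fst))

theorem mem_cands {S L : List Term} (h : ∀ t ∈ L, t ∈ S) : L ∈ cands S L.length := by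
  induction L with
  | nil => simp [cands]
  | cons a L ih =>
    refine List.mem_flatMap.2 ⟨L, ih fun t ht => h t (List.mem_cons_of_mem _ ht), ?_⟩
    exact List.mem_map.2 ⟨a, h a List.mem_cons_self, rfl⟩

/-- The contracta of `t` for the rule `p` at the root. A matching substitution sends the
variables of the left-hand side to subterms of `t`, so finitely many candidates suffice. -/
def ruleStep (t : Term) (p : Term × Term) : List Term :=
  ((cands (subterms t) (p.1.encode + 1)).filter
    fun L => p.1.subst (listSubst L) = t).map fun L => p.2.subst (listSubst L)

theorem primrec_ruleStep : Primrec₂ ruleStep := by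
  refine Primrec.list_map (f := fun x : Term × (Term × Term) =>
    (cands (subterms x.1) (x.2.1.encode + 1)).filter
      fun L => x.2.1.subst (listSubst L) = x.1) ?_ ?_
  · have h1 : PrimrecRel fun (L : List Term) (x : Term × (Term × Term)) =>
        x.2.1.subst (listSubst L) = x.1 :=
      Primrec.eq.comp (primrec_subst.comp .fst (Primrec.fst.comp (Primrec.snd.comp .snd)))
        (Primrec.fst.comp .snd)
    exact h1.listFilter.comp (primrec_cands.comp (primrec_subterms.comp .fst)
      (Primrec.succ.comp (Primrec.encode.comp (Primrec.fst.comp .snd)))) .id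
  · exact primrec_subst.comp .snd (Primrec.snd.comp (Primrec.snd.comp .fst))

theorem mem_ruleStep {t u : Term} {p : Term × Term}
    (hp : ∀ n, IsVarOf n p.2 → IsVarOf n p.1) :
    u ∈ ruleStep t p ↔ ∃ σ, t = p.1.subst σ ∧ u = p.2.subst σ := by
  simp only [ruleStep, List.mem_map, List.mem_filter, decide_eq_true_eq]
  constructor
  · rintro ⟨L, ⟨-, h1⟩, h2⟩
    exact ⟨_, h1.symm, h2.symm⟩
  · rintro ⟨σ, rfl, rfl⟩
    classical
    -- positions that are not variables of the left-hand side receive a dummy subterm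
    let τ : ℕ → Term := fun n => if IsVarOf n p.1 then σ n else p.1.subst σ
    have hτ : ∀ n, IsVarOf n p.1 →
        listSubst ((List.range (p.1.encode + 1)).map τ) n = σ n := by
      intro n hn
      have := Nat.lt_succ_iff.2 (le_encode_of_isVarOf hn)
      simp [listSubst, this, τ, hn]
    refine ⟨(List.range (p.1.encode + 1)).map τ, ⟨?_, subst_congr hτ⟩,
      subst_congr fun n hn => hτ n (hp n hn)⟩
    have := mem_cands (S := subterms (p.1.subst σ))
      (L := (List.range (p.1.encode + 1)).map τ) (by
        simp only [List.mem_map]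
        rintro _ ⟨n, -, rfl⟩
        by_cases hn : IsVarOf n p.1
        · simp only [τ, hn, if_true]; exact subst_mem_subterms hn
        · simp only [τ, hn, if_false]; exact self_mem_subterms _)
    simpa using this

/-- The list of all one-step reducts of a term. -/
def step (R : List (Term × Term)) : Term → List Term :=
  fold (fun n => R.flatMap (ruleStep (.var n))) fun f ts rs =>
    R.flatMap (ruleStep (.app f ts)) ++
      (List.range ts.length).flatMap fun i => (rs.getD i []).map fun u => .app f (ts.set i u)

theorem primrec_step : Primrec₂ step := by
  refine primrec_term_rec (V := fun R n => R.flatMap (ruleStep (.var n)))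
    (G := fun R (x : ℕ × List Term × List (List Term)) =>
      R.flatMap (ruleStep (.app x.1 x.2.1)) ++
      (List.range x.2.1.length).flatMap fun i =>
        (x.2.2.getD i []).map fun u => Term.app x.1 (x.2.1.set i u))
    ?_ ?_ (fun _ n => fold_var _ _ n) (fun _ f ts => fold_app _ _ f ts)
  · exact Primrec.list_flatMap .fst
      (primrec_ruleStep.comp (primrec_var.comp (Primrec.snd.comp .fst)) .snd)
  · refine Primrec.list_append.comp ?_ ?_
    · exact Primrec.list_flatMap .fst
        (primrec_ruleStep.comp (primrec_app.comp (Primrec.fst.comp (Primrec.snd.comp .fst))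
          (Primrec.fst.comp (Primrec.snd.comp (Primrec.snd.comp .fst)))) .snd)
    · refine Primrec.list_flatMap
        (Primrec.list_range.comp (Primrec.list_length.comp
          (Primrec.fst.comp (Primrec.snd.comp .snd)))) ?_
      refine Primrec.list_map ((Primrec.list_getD []).comp
        (Primrec.snd.comp (Primrec.snd.comp (Primrec.snd.comp .fst))) .snd) ?_
      exact primrec_app.comp (Primrec.fst.comp (Primrec.snd.comp (Primrec.fst.comp .fst)))
        (Primrec.list_set.comp
          (Primrec.fst.comp (Primrec.snd.comp (Primrec.snd.comp (Primrec.fst.comp .fst))))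
          (Primrec.pair (Primrec.snd.comp .fst) .snd))

theorem mem_rootStep {R : List (Term × Term)}
    (hR : ∀ p ∈ R, ∀ n, IsVarOf n p.2 → IsVarOf n p.1) {t u : Term} :
    u ∈ R.flatMap (ruleStep t) ↔ RootStep R t u := by
  simp only [List.mem_flatMap]
  constructor
  · rintro ⟨p, hp, h⟩
    obtain ⟨σ, h1, h2⟩ := (mem_ruleStep (hR p hp)).1 h
    exact ⟨p.1, p.2, σ, hp, h1, h2⟩
  · rintro ⟨l, r, σ, h, h1, h2⟩
    exact ⟨_, h, (mem_ruleStep (hR _ h)).2 ⟨σ, h1, h2⟩⟩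

theorem rootStep_rewrite {R : List (Term × Term)} {t u : Term} (h : RootStep R t u) :
    Rewrite R t u := by
  obtain ⟨l, r, σ, h, rfl, rfl⟩ := h
  exact .rule l r σ h

theorem rewrite_app {R : List (Term × Term)} {f : ℕ} {ts : List Term} {u : Term}
    (h : Rewrite R (.app f ts) u) : RootStep R (.app f ts) u ∨
      ∃ ts₁ t t' ts₂, ts = ts₁ ++ t :: ts₂ ∧ u = .app f (ts₁ ++ t' :: ts₂) ∧ Rewrite R t t' := by
  generalize hs : Term.app f ts = s at h
  cases h with
  | rule l r σ h => exact .inl ⟨l, r, σ, h, rfl, rfl⟩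
  | congr g ts₁ ts₂ t t' h =>
    cases hs
    exact .inr ⟨ts₁, t, t', ts₂, rfl, rfl, h⟩

theorem rewrite_var {R : List (Term × Term)} {n : ℕ} {u : Term}
    (h : Rewrite R (.var n) u) : RootStep R (.var n) u := by
  generalize hs : Term.var n = s at h
  cases h with
  | rule l r σ h => exact ⟨l, r, σ, h, rfl, rfl⟩
  | congr g ts₁ ts₂ t t' h => cases hs

theorem mem_step {R : List (Term × Term)}
    (hR : ∀ p ∈ R, ∀ n, IsVarOf n p.2 → IsVarOf n p.1) {t u : Term} :
    u ∈ step R t ↔ Rewrite R t u := by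
  induction t using term_ind generalizing u with
  | hv n =>
    rw [step, fold_var, mem_rootStep hR]
    exact ⟨rootStep_rewrite, rewrite_var⟩
  | ha f ts ih =>
    rw [step, fold_app, List.mem_append, mem_rootStep hR]
    constructor
    · rintro (h | h)
      · exact rootStep_rewrite h
      · simp only [List.mem_flatMap, List.mem_range, List.mem_map] at h
        obtain ⟨i, hi, v, hv, rfl⟩ := h
        have hv' : Rewrite R ts[i] v :=
          (ih _ (List.getElem_mem hi)).1 (by simpa [hi, step] using hv)
        have := Rewrite.congr f (ts.take i) (ts.drop (i + 1)) _ _ hv'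
        rwa [← List.drop_eq_getElem_cons hi, List.take_append_drop,
          ← (List.set_eq_take_append_cons_drop (l := ts) (i := i) (a := v)).trans (if_pos hi)]
          at this
    · intro h
      rcases rewrite_app h with h | ⟨ts₁, t, t', ts₂, rfl, rfl, ht⟩
      · exact .inl h
      · refine .inr ?_
        simp only [List.mem_flatMap, List.mem_range, List.mem_map]
        refine ⟨ts₁.length, by simp, t', ?_, by simp⟩
        simpa [step] using (ih t (by simp)).2 ht

/-! ### Uniform termination is a Π⁰₂ property -/

/-- `t` is accessible for the converse of rewriting. -/
def SN (R : List (Term × Term)) (t : Term) : Prop := Acc (fun a b => Rewrite R b a) t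

theorem snon_iff {R : List (Term × Term)} {t : Term} : SNon R t ↔ SN R t := by
  rw [SN, ← not_iff_not, not_acc_iff_exists_descending_chain, SNon, not_not]

/-- The `k`-step reducts of the terms in `L`. -/
def reducts (R : List (Term × Term)) (L : List Term) (k : ℕ) : List Term :=
  k.rec L fun _ ih => ih.flatMap (step R)

theorem primrec_reducts : Primrec₂ fun (x : List (Term × Term) × List Term) k =>
    reducts x.1 x.2 k := by
  refine Primrec.nat_rec (f := fun x : List (Term × Term) × List Term => x.2)
    (g := fun (x : List (Term × Term) × List Term) (p : ℕ × List Term) =>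
      p.2.flatMap (step x.1)) .snd ?_
  exact Primrec.list_flatMap (Primrec.snd.comp .snd)
    (primrec_step.comp (Primrec.fst.comp (Primrec.fst.comp .fst)) .snd)

section bound

variable {R : List (Term × Term)}

theorem mem_reducts_succ (hR : ∀ p ∈ R, ∀ n, IsVarOf n p.2 → IsVarOf n p.1)
    {t u : Term} {k : ℕ} :
    u ∈ reducts R [t] (k + 1) ↔ ∃ v, Rewrite R t v ∧ u ∈ reducts R [v] k := by
  induction k generalizing u with
  | zero => simp [reducts, mem_step hR]
  | succ k ih =>
    change u ∈ (reducts R [t] (k + 1)).flatMap (step R) ↔ ∃ v, Rewrite R t v ∧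
      u ∈ (reducts R [v] k).flatMap (step R)
    simp only [List.mem_flatMap, ih]
    constructor
    · rintro ⟨w, ⟨v, h1, h2⟩, h3⟩
      exact ⟨v, h1, w, h2, h3⟩
    · rintro ⟨v, h1, w, h2, h3⟩
      exact ⟨w, ⟨v, h1, h2⟩, h3⟩

theorem reducts_succ_eq_nil (hR : ∀ p ∈ R, ∀ n, IsVarOf n p.2 → IsVarOf n p.1)
    {t : Term} {k : ℕ} :
    reducts R [t] (k + 1) = [] ↔ ∀ v, Rewrite R t v → reducts R [v] k = [] := by
  simp only [List.eq_nil_iff_forall_not_mem, mem_reducts_succ hR]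
  grind

/-- Kőnig's lemma for the finitely branching relation `→_R`: a term is strongly normalizing
iff the lengths of its reductions are bounded. -/
theorem sn_iff_reducts (hR : ∀ p ∈ R, ∀ n, IsVarOf n p.2 → IsVarOf n p.1)
    {t : Term} : SN R t ↔ ∃ k, reducts R [t] k = [] := by
  constructor
  · intro h
    induction h with
    | intro t _ ih =>
      have : ∀ L : List Term, (∀ v ∈ L, ∃ k, reducts R [v] k = []) →
          ∃ k, ∀ v ∈ L, reducts R [v] k = [] := by
        intro L hL
        have mono : ∀ (v : Term) (j k : ℕ), j ≤ k → reducts R [v] j = [] →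
            reducts R [v] k = [] := by
          intro v j k hjk h
          induction k, hjk using Nat.le_induction with
          | base => exact h
          | succ k _ ih =>
            change (reducts R [v] k).flatMap (step R) = []
            rw [ih]; rfl
        induction L with
        | nil => exact ⟨0, by simp⟩
        | cons a L ihL =>
          obtain ⟨i, hi⟩ := hL a (by simp)
          obtain ⟨j, hj⟩ := ihL fun v hv => hL v (by simp [hv])
          refine ⟨max i j, fun v hv => ?_⟩
          rcases List.mem_cons.1 hv with rfl | hv
          · exact mono _ _ _ (le_max_left _ _) hi
          · exact mono _ _ _ (le_max_right _ _) (hj v hv)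
      obtain ⟨k, hk⟩ := this (step R t) fun v hv => ih v ((mem_step hR).1 hv)
      exact ⟨k + 1, (reducts_succ_eq_nil hR).2 fun v hv => hk v ((mem_step hR).2 hv)⟩
  · rintro ⟨k, hk⟩
    induction k generalizing t with
    | zero => simp [reducts] at hk
    | succ k ih => exact ⟨_, fun v hv => ih ((reducts_succ_eq_nil hR).1 hk v hv)⟩

end bound

theorem encodeTRS_eq (R : List (Term × Term)) : encodeTRS R = encode R :=
  encode_list_map R

theorem pair_code (sig : List (ℕ × ℕ)) (R : List (Term × Term)) :
    Nat.pair (encodeSig sig) (encodeTRS R) = encode (sig, R) := by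
  rw [encodeTRS_eq]; rfl

/-- The set of codes of uniformly terminating rewriting systems. -/
def snSet : Set ℕ := { n : ℕ | ∃ (sig : List (ℕ × ℕ)) (R : List (Term × Term)),
      WFTRS sig R ∧ n = Nat.pair (encodeSig sig) (encodeTRS R) ∧
      ∀ t : Term, WFTerm sig t → SNon R t }

theorem mem_snSet {sig : List (ℕ × ℕ)} {R : List (Term × Term)} :
    Nat.pair (encodeSig sig) (encodeTRS R) ∈ snSet ↔
      WFTRS sig R ∧ ∀ t : Term, WFTerm sig t → SN R t := by
  constructor
  · rintro ⟨sig', R', h1, h2, h3⟩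
    rw [pair_code, pair_code] at h2
    obtain ⟨rfl, rfl⟩ := Prod.mk.inj (encode_injective h2)
    exact ⟨h1, fun t ht => snon_iff.1 (h3 t ht)⟩
  · rintro ⟨h1, h2⟩
    exact ⟨sig, R, h1, rfl, fun t ht => snon_iff.2 (h2 t ht)⟩

open Classical in
theorem pi02_snSet : Pi02 snSet := by
  let sys (n : ℕ) := ofNat (List (ℕ × ℕ) × List (Term × Term)) n
  let Q : ℕ × ℕ × ℕ → Prop := fun x => WFTRS (sys x.1).1 (sys x.1).2 ∧
    (¬ wfTerm (sys x.1).1 (ofNat Term x.2.1) = true ∨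
      reducts (sys x.1).2 [ofNat Term x.2.1] x.2.2 = [])
  have hsys : Primrec sys := Primrec.ofNat _
  have hQ : PrimrecPred Q := by
    refine PrimrecPred.and ?_ (PrimrecPred.or (PrimrecPred.not ?_) ?_)
    · exact primrec_wfTRS.comp (Primrec.fst.comp (hsys.comp .fst))
        (Primrec.snd.comp (hsys.comp .fst))
    · exact Primrec.eq.comp (primrec_wfTerm.comp (Primrec.fst.comp (hsys.comp .fst))
        ((Primrec.ofNat _).comp (Primrec.fst.comp .snd))) (.const true)
    · exact Primrec.eq.comp (primrec_reducts.comp (Primrec.pair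
        (Primrec.snd.comp (hsys.comp .fst))
        (Primrec.list_cons.comp ((Primrec.ofNat _).comp (Primrec.fst.comp .snd)) (.const [])))
        (Primrec.snd.comp .snd)) (.const [])
  refine ⟨fun n x y => decide (Q (n, x, y)), hQ.decide.to_comp, fun n => ?_⟩
  obtain ⟨⟨sig, R⟩, rfl⟩ : ∃ s : List (ℕ × ℕ) × List (Term × Term), n = encode s :=
    ⟨sys n, (encode_ofNat n).symm⟩
  rw [← pair_code, mem_snSet, pair_code]
  simp only [decide_eq_true_eq, Q, sys, ofNat_encode]
  constructor
  · rintro ⟨h1, h2⟩ x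
    by_cases hx : WFTerm sig (ofNat Term x)
    · obtain ⟨k, hk⟩ := (sn_iff_reducts fun p hp => (h1.2 p hp).2.2.2).1 (h2 _ hx)
      exact ⟨k, h1, .inr hk⟩
    · exact ⟨0, h1, .inl (by rwa [wfTerm_iff])⟩
  · intro h
    obtain ⟨-, h1, -⟩ := h 0
    refine ⟨h1, fun t ht => ?_⟩
    obtain ⟨k, -, hk⟩ := h (encode t)
    rw [ofNat_encode, wfTerm_iff] at hk
    exact (sn_iff_reducts fun p hp => (h1.2 p hp).2.2.2).2 ⟨k, hk.resolve_left (not_not.2 ht)⟩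

/-! ### An interpreter for primitive recursive functions -/

open Nat.Partrec (Code)

/-- The numeral `0`, also used as the empty tuple. -/
abbrev tz : Term := .app 0 []
abbrev tsucc (x : Term) : Term := .app 1 [x]
abbrev tpair (x y : Term) : Term := .app 2 [x, y]
/-- Application of (the term for) a program to an argument. -/
abbrev tap (c x : Term) : Term := .app 3 [c, x]
/-- The symbol of the search rule. -/
abbrev tgo (x y z : Term) : Term := .app 4 [x, y, z]
abbrev cZero : Term := .app 5 []
abbrev cSucc : Term := .app 6 []
abbrev cLeft : Term := .app 7 []
abbrev cRight : Term := .app 8 []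
abbrev cPair (f g : Term) : Term := .app 9 [f, g]
abbrev cComp (f g : Term) : Term := .app 10 [f, g]
abbrev cPrec (f g : Term) : Term := .app 11 [f, g]

/-- The signature of the interpreter, including the symbol of the search rule. -/
def sig₀ : List (ℕ × ℕ) :=
  [(0, 0), (1, 1), (2, 2), (3, 2), (4, 3), (5, 0), (6, 0), (7, 0), (8, 0), (9, 2), (10, 2),
    (11, 2)]

/-- Numerals. -/
def num (n : ℕ) : Term := n.rec tz fun _ t => tsucc t

@[simp] theorem num_zero : num 0 = tz := rfl
@[simp] theorem num_succ (n : ℕ) : num (n + 1) = tsucc (num n) := rfl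

/-- Programs as ground terms. The minimization constructor is not used and is sent to `0`. -/
def code : Code → Term
  | .zero => cZero
  | .succ => cSucc
  | .left => cLeft
  | .right => cRight
  | .pair f g => cPair (code f) (code g)
  | .comp f g => cComp (code f) (code g)
  | .prec f g => cPrec (code f) (code g)
  | .rfind' _ => tz

/-- Tuples of numerals, as nested pairs. -/
def tup : List ℕ → Term
  | [] => tz
  | a :: l => tpair (num a) (tup l)

/-- The rules of the interpreter. -/
def baseRules : List (Term × Term) :=
  [(tap cZero (.var 0), tz),
   (tap cSucc (.var 0), tsucc (.var 0)),
   (tap cLeft (tpair (.var 0) (.var 1)), .var 0),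
   (tap cRight (tpair (.var 0) (.var 1)), .var 1),
   (tap (cPair (.var 0) (.var 1)) (.var 2),
      tpair (tap (.var 0) (.var 2)) (tap (.var 1) (.var 2))),
   (tap (cComp (.var 0) (.var 1)) (.var 2), tap (.var 0) (tap (.var 1) (.var 2))),
   (tap (cPrec (.var 0) (.var 1)) (tpair tz (.var 2)), tap (.var 0) (.var 2)),
   (tap (cPrec (.var 0) (.var 1)) (tpair (tsucc (.var 3)) (.var 2)),
      tap (.var 1) (tpair (.var 3)
        (tpair (tap (cPrec (.var 0) (.var 1)) (tpair (.var 3) (.var 2))) (.var 2))))]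

/-- The search rule: `go(x, y, 0) → go(x, y + 1, T(n, x, y))`. -/
def goRule (T : Code) (n : ℕ) : Term × Term :=
  (tgo (.var 0) (.var 1) tz,
    tgo (.var 0) (tsucc (.var 1))
      (tap (code T) (tpair (num n) (tpair (.var 0) (tpair (.var 1) tz)))))

/-- The rewriting system assigned to the input `n` and the program `T`. -/
def rules (T : Code) (n : ℕ) : List (Term × Term) := goRule T n :: baseRules

@[simp] theorem num_subst (σ : ℕ → Term) (n : ℕ) : (num n).subst σ = num n := by
  induction n with
  | zero => simp [subst_app]
  | succ n ih => simp [subst_app, ih]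

@[simp] theorem code_subst (σ : ℕ → Term) (c : Code) : (code c).subst σ = code c := by
  induction c <;> simp [code, subst_app, *]

/-! ### The numerical invariant -/

/-- The value of a program. Primitive recursion is on the first component of the argument. -/
def ev : Code → ℕ → ℕ
  | .zero, _ => 0
  | .succ, n => n + 1
  | .left, n => n.unpair.1
  | .right, n => n.unpair.2
  | .pair f g, n => Nat.pair (ev f n) (ev g n)
  | .comp f g, n => ev f (ev g n)
  | .prec f g, n => n.unpair.1.rec (ev f n.unpair.2) fun y ih =>
      ev g (Nat.pair y (Nat.pair ih n.unpair.2))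
  | .rfind' _, _ => 0

/-- The interpretation of the function symbols in `ℕ`. -/
def interp : ℕ → List ℕ → ℕ
  | 1, [a] => a + 1
  | 2, [a, b] => Nat.pair a b
  | 3, [a, b] => ev (ofNat Code a) b
  | 5, [] => encode Code.zero
  | 6, [] => encode Code.succ
  | 7, [] => encode Code.left
  | 8, [] => encode Code.right
  | 9, [a, b] => encode (Code.pair (ofNat Code a) (ofNat Code b))
  | 10, [a, b] => encode (Code.comp (ofNat Code a) (ofNat Code b))
  | 11, [a, b] => encode (Code.prec (ofNat Code a) (ofNat Code b))
  | _, _ => 0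

/-- The value of a term, with all variables set to `0`. It is defined for every term,
well-formed or not, and it is invariant under rewriting. -/
def val : Term → ℕ := fold (fun _ => 0) fun f _ rs => interp f rs

theorem val_app (f : ℕ) (ts : List Term) : val (.app f ts) = interp f (ts.map val) :=
  fold_app _ _ f ts

@[simp] theorem val_num (n : ℕ) : val (num n) = n := by
  induction n with
  | zero => simp [val_app, interp]
  | succ n ih => simp [val_app, interp, ih]

theorem val_rule {T : Code} {n : ℕ} {p : Term × Term} (hp : p ∈ rules T n) (σ : ℕ → Term) :
    val (p.1.subst σ) = val (p.2.subst σ) := by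
  simp only [rules, baseRules, goRule, List.mem_cons, List.not_mem_nil, or_false] at hp
  rcases hp with rfl | rfl | rfl | rfl | rfl | rfl | rfl | rfl | rfl <;>
    simp [subst_app, val_app, interp, ev]

theorem val_rewrite {T : Code} {n : ℕ} {t u : Term} (h : Rewrite (rules T n) t u) :
    val t = val u := by
  induction h with
  | rule l r σ h => exact val_rule h σ
  | congr f ts₁ ts₂ t t' _ ih => simp [val_app, ih]

theorem val_reduces {T : Code} {n : ℕ} {t u : Term} (h : Reduces (rules T n) t u) :
    val t = val u := by
  induction h with
  | refl => rfl
  | tail _ h ih => exact ih.trans (val_rewrite h)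

/-! ### Strong normalization from the numerical invariant -/

theorem sn_arg {R : List (Term × Term)} {s : Term} (h : SN R s) :
    ∀ {f : ℕ} {ts : List Term} {t : Term}, s = .app f ts → t ∈ ts → SN R t := by
  induction h with
  | intro s _ ih =>
    rintro f ts t rfl ht
    obtain ⟨ts₁, ts₂, rfl⟩ := List.append_of_mem ht
    exact ⟨_, fun t' h => ih _ (Rewrite.congr f ts₁ ts₂ t t' h) rfl (by simp)⟩

/-- Rewriting one entry of a list of terms. -/
def ArgStep (R : List (Term × Term)) (ts' ts : List Term) : Prop :=
  ∃ ts₁ t t' ts₂, ts = ts₁ ++ t :: ts₂ ∧ ts' = ts₁ ++ t' :: ts₂ ∧ Rewrite R t t'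

theorem acc_argStep {R : List (Term × Term)} (ts : List Term) (h : ∀ t ∈ ts, SN R t) :
    Acc (ArgStep R) ts := by
  induction ts with
  | nil => exact ⟨_, by rintro _ ⟨ts₁, t, t', ts₂, h, -, -⟩; simp at h⟩
  | cons t ts ih =>
    have ht : SN R t := h t (by simp)
    have hts : Acc (ArgStep R) ts := ih fun t ht => h t (by simp [ht])
    clear ih h
    induction ht generalizing ts with
    | intro t _ iht =>
      induction hts with
      | intro ts hts ihts =>
        refine ⟨_, ?_⟩
        rintro _ ⟨ts₁, s, s', ts₂, h1, rfl, h3⟩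
        cases ts₁ with
        | nil =>
          obtain ⟨rfl, rfl⟩ := List.cons.inj h1
          exact iht s' h3 _ ⟨_, hts⟩
        | cons a ts₁ =>
          obtain ⟨rfl, rfl⟩ := List.cons.inj h1
          exact ihts _ ⟨ts₁, s, s', ts₂, rfl, rfl, h3⟩

section sn

variable {T : Code} {n : ℕ}

/-- To show that `f(ts)` is strongly normalizing it suffices to treat root steps; reductions
in the arguments may be performed first, and they do not change the values `vs`. -/
theorem sn_app (f : ℕ) (vs : List ℕ)
    (h : ∀ ts, ts.map val = vs → (∀ t ∈ ts, SN (rules T n) t) →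
      ∀ u, RootStep (rules T n) (.app f ts) u → SN (rules T n) u)
    (ts : List Term) (hv : ts.map val = vs) (hts : ∀ t ∈ ts, SN (rules T n) t) :
    SN (rules T n) (.app f ts) := by
  induction acc_argStep ts hts with
  | intro ts _ ih =>
    refine ⟨_, fun u hu => ?_⟩
    rcases rewrite_app hu with hu | ⟨ts₁, t, t', ts₂, rfl, rfl, ht'⟩
    · exact h ts hv hts u hu
    · refine ih _ ⟨ts₁, t, t', ts₂, rfl, rfl, ht'⟩ ?_ ?_
      · rw [← hv]; simp [val_rewrite ht']
      · intro s hs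
        simp only [List.mem_append, List.mem_cons] at hs
        rcases hs with hs | rfl | hs
        · exact hts s (by simp [hs])
        · exact (hts t (by simp)).inv ht'
        · exact hts s (by simp [hs])

theorem rootStep_head {f : ℕ} {ts : List Term} {u : Term}
    (h : RootStep (rules T n) (.app f ts) u) : f = 3 ∨ f = 4 := by
  obtain ⟨l, r, σ, h, h1, -⟩ := h
  simp only [rules, baseRules, goRule, List.mem_cons, List.not_mem_nil, or_false,
    Prod.mk.injEq] at h
  rcases h with h | h | h | h | h | h | h | h | h <;>
    · rw [h.1, subst_app] at h1
      simp [(Term.app.inj h1).1]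

theorem sn_inert {f : ℕ} {ts : List Term} (h3 : f ≠ 3) (h4 : f ≠ 4)
    (hts : ∀ t ∈ ts, SN (rules T n) t) : SN (rules T n) (.app f ts) :=
  sn_app f _ (fun _ _ _ _ hu => absurd (rootStep_head hu) (by simp [h3, h4])) ts rfl hts

theorem sn_var (m : ℕ) : SN (rules T n) (.var m) := by
  refine ⟨_, fun u hu => ?_⟩
  obtain ⟨l, r, σ, h, h1, -⟩ := rewrite_var hu
  simp only [rules, baseRules, goRule, List.mem_cons, List.not_mem_nil, or_false,
    Prod.mk.injEq] at h
  rcases h with h | h | h | h | h | h | h | h | h <;>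
    · rw [h.1, subst_app] at h1
      cases h1

theorem sn_num (m : ℕ) : SN (rules T n) (num m) := by
  induction m with
  | zero => exact sn_inert (by simp) (by simp) (by simp)
  | succ m ih =>
    exact sn_inert (by simp) (by simp) (by intro t ht; rw [List.mem_singleton.1 ht]; exact ih)

theorem sn_code (c : Code) : SN (rules T n) (code c) := by
  induction c <;> exact sn_inert (by simp) (by simp) (by simp [*])

theorem sn_pair {x y : Term} (hx : SN (rules T n) x) (hy : SN (rules T n) y) :
    SN (rules T n) (tpair x y) :=
  sn_inert (by simp) (by simp) (by simp [hx, hy])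

/-- The interpreter rules decrease the value `a` of the program, or keep it and decrease the value
`m` of the argument. -/
theorem sn_ap_aux (a m : ℕ) : ∀ c x, val c = a → val x = m → SN (rules T n) c →
    SN (rules T n) x → SN (rules T n) (tap c x) := by
  induction a using Nat.strong_induction_on generalizing m with
  | _ a iha =>
  induction m using Nat.strong_induction_on with
  | _ m ihm =>
  intro c x hc hx hcs hxs
  refine sn_app 3 [a, m] ?_ [c, x] (by simp [hc, hx]) (by simp [hcs, hxs])
  clear! c x
  rintro ts hv hts u ⟨l, r, σ, h, h1, rfl⟩
  simp only [rules, baseRules, goRule, List.mem_cons, List.not_mem_nil, or_false,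
    Prod.mk.injEq] at h
  rcases h with ⟨rfl, rfl⟩ | ⟨rfl, rfl⟩ | ⟨rfl, rfl⟩ | ⟨rfl, rfl⟩ | ⟨rfl, rfl⟩ | ⟨rfl, rfl⟩ |
    ⟨rfl, rfl⟩ | ⟨rfl, rfl⟩ | ⟨rfl, rfl⟩ <;>
  simp only [subst_app, List.map_cons, List.map_nil, subst_var, Term.app.injEq,
    Nat.reduceEqDiff, false_and, true_and] at h1 <;>
  subst h1 <;>
  simp only [List.map_cons, List.map_nil, val_app, interp, List.cons.injEq, and_true,
    List.mem_cons, List.not_mem_nil, or_false, forall_eq_or_imp, forall_eq] at hv hts <;>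
  simp only [subst_app, List.map_cons, List.map_nil, subst_var]
  · exact sn_inert (by simp) (by simp) (by simp)
  · exact sn_inert (by simp) (by simp) (by simpa using hts.2)
  · exact sn_arg hts.2 rfl (by simp)
  · exact sn_arg hts.2 rfl (by simp)
  · have hf := sn_arg hts.1 rfl (t := σ 0) (by simp)
    have hg := sn_arg hts.1 rfl (t := σ 1) (by simp)
    have := Code.encode_lt_pair (ofNat Code (val (σ 0))) (ofNat Code (val (σ 1)))
    rw [encode_ofNat, encode_ofNat, hv.1] at this
    exact sn_pair (iha _ this.1 _ _ _ rfl rfl hf hts.2) (iha _ this.2 _ _ _ rfl rfl hg hts.2)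
  · have hf := sn_arg hts.1 rfl (t := σ 0) (by simp)
    have hg := sn_arg hts.1 rfl (t := σ 1) (by simp)
    have := Code.encode_lt_comp (ofNat Code (val (σ 0))) (ofNat Code (val (σ 1)))
    rw [encode_ofNat, encode_ofNat, hv.1] at this
    exact iha _ this.1 _ _ _ rfl rfl hf (iha _ this.2 _ _ _ rfl rfl hg hts.2)
  · have hf := sn_arg hts.1 rfl (t := σ 0) (by simp)
    have hx := sn_arg hts.2 rfl (t := σ 2) (by simp)
    have := Code.encode_lt_prec (ofNat Code (val (σ 0))) (ofNat Code (val (σ 1)))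
    rw [encode_ofNat, encode_ofNat, hv.1] at this
    exact iha _ this.1 _ _ _ rfl rfl hf hx
  · have hg := sn_arg hts.1 rfl (t := σ 1) (by simp)
    have hx := sn_arg hts.2 rfl (t := σ 2) (by simp)
    have hy := sn_arg (sn_arg hts.2 rfl (t := tsucc (σ 3)) (by simp)) rfl (t := σ 3) (by simp)
    have := Code.encode_lt_prec (ofNat Code (val (σ 0))) (ofNat Code (val (σ 1)))
    rw [encode_ofNat, encode_ofNat, hv.1] at this
    -- the recursive call has a smaller predecessor argument and the same parameters
    have hlt : Nat.pair (val (σ 3)) (val (σ 2)) < m := by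
      rw [← hv.2]; exact Nat.pair_lt_pair_left _ (Nat.lt_succ_self _)
    refine iha _ this.2 _ _ _ rfl rfl hg (sn_pair hy (sn_pair ?_ hx))
    exact ihm _ hlt _ _ (by simpa [val_app, interp] using hv.1) (by simp [val_app, interp])
      hts.1 (sn_pair hy hx)

/-- Applications are strongly normalizing, whatever the search rule does: the recursion is
controlled by the values of the program and of its argument. -/
theorem sn_ap {c x : Term} (hc : SN (rules T n) c) (hx : SN (rules T n) x) :
    SN (rules T n) (tap c x) := sn_ap_aux _ _ c x rfl rfl hc hx

/-- The value of the program `T` on the triple `(n, x, y)`. -/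
def tval (T : Code) (n x y : ℕ) : ℕ :=
  val (tap (code T) (tup [n, x, y]))

/-- The number `m` bounds the remaining root steps of a search: none once the value of the third
argument is nonzero, and otherwise one more than the distance to the threshold `y₀`. -/
theorem sn_go_aux {x y₀ : ℕ} (h : ∀ y ≥ y₀, tval T n x y ≠ 0) (m : ℕ) : ∀ X Y C, val X = x →
    (if val C = 0 then 1 + (y₀ - val Y) else 0) = m → SN (rules T n) X →
    SN (rules T n) Y → SN (rules T n) C → SN (rules T n) (tgo X Y C) := by
  induction m using Nat.strong_induction_on with
  | _ m ih =>
  intro X Y C hX hm sX sY sC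
  refine sn_app 4 [x, val Y, val C] ?_ [X, Y, C] (by simp [hX]) (by simp [sX, sY, sC])
  generalize val Y = y at hm
  generalize val C = z at hm
  clear! X Y C
  rintro ts hv hts u ⟨l, r, σ, h', h1, rfl⟩
  simp only [rules, baseRules, goRule, List.mem_cons, List.not_mem_nil, or_false,
    Prod.mk.injEq] at h'
  rcases h' with ⟨rfl, rfl⟩ | ⟨rfl, rfl⟩ | ⟨rfl, rfl⟩ | ⟨rfl, rfl⟩ | ⟨rfl, rfl⟩ | ⟨rfl, rfl⟩ |
    ⟨rfl, rfl⟩ | ⟨rfl, rfl⟩ | ⟨rfl, rfl⟩ <;>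
  simp only [subst_app, List.map_cons, List.map_nil, subst_var, Term.app.injEq,
    Nat.reduceEqDiff, false_and, true_and] at h1
  subst h1
  simp only [List.map_cons, List.map_nil, val_app, interp, List.cons.injEq, and_true,
    List.mem_cons, List.not_mem_nil, or_false, forall_eq_or_imp, forall_eq] at hv hts
  simp only [subst_app, List.map_cons, List.map_nil, subst_var, code_subst, num_subst]
  obtain ⟨rfl, rfl, rfl⟩ := hv
  have hval : val (tap (code T) (tpair (num n) (tpair (σ 0) (tpair (σ 1) tz)))) =
      tval T n (val (σ 0)) (val (σ 1)) := by
    simp [tval, tup, val_app, interp]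
  have hsucc : val (tsucc (σ 1)) = val (σ 1) + 1 := by simp [val_app, interp]
  refine ih _ ?_ _ _ _ rfl rfl hts.1 (sn_inert (by simp) (by simp) (by simpa using hts.2.1))
    (sn_ap (sn_code T) (sn_pair (sn_num n) (sn_pair hts.1 (sn_pair hts.2.1 hts.2.2))))
  rw [hval, hsucc]
  rw [if_pos rfl] at hm
  split_ifs with h0
  · have : val (σ 1) < y₀ := by
      by_contra hy
      exact h _ (not_lt.1 hy) h0
    omega
  · omega

/-- If for every `x` the search eventually succeeds, then every term is strongly
normalizing. -/
theorem sn_all (h : ∀ x, ∃ y₀, ∀ y ≥ y₀, tval T n x y ≠ 0) (t : Term) : SN (rules T n) t := by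
  induction t using term_ind with
  | hv m => exact sn_var m
  | ha f ts ih =>
    refine sn_app f (ts.map val) ?_ ts rfl ih
    intro ts _ hts u hu
    -- a root step exists only for the symbols `3` and `4`, whose terms are already known to be
    -- strongly normalizing, and hence so are their reducts
    refine (show SN (rules T n) (.app f ts) from ?_).inv (rootStep_rewrite hu)
    obtain ⟨l, r, σ, h', h1, -⟩ := hu
    simp only [rules, baseRules, goRule, List.mem_cons, List.not_mem_nil, or_false,
      Prod.mk.injEq] at h'
    rcases h' with h' | h' | h' | h' | h' | h' | h' | h' | h' <;>
      rw [h'.1, subst_app] at h1 <;> obtain ⟨rfl, rfl⟩ := Term.app.inj h1 <;>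
      simp only [List.map_cons, List.map_nil, List.mem_cons, List.not_mem_nil, or_false,
        forall_eq_or_imp, forall_eq] at hts ⊢
    · obtain ⟨y₀, hy₀⟩ := h (val ((Term.var 0).subst σ))
      exact sn_go_aux hy₀ _ _ _ _ rfl rfl hts.1 hts.2.1 hts.2.2
    all_goals exact sn_ap hts.1 hts.2

end sn

/-! ### The interpreter evaluates primitive recursive functions -/

theorem base_mem_rules (T : Code) (n : ℕ) : ∀ p ∈ baseRules, p ∈ rules T n :=
  fun _ hp => List.mem_cons_of_mem _ hp

theorem rewrite_mono {R S : List (Term × Term)} (h : ∀ p ∈ R, p ∈ S) {t u : Term}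
    (ht : Rewrite R t u) : Rewrite S t u := by
  induction ht with
  | rule l r σ hl => exact .rule l r σ (h _ hl)
  | congr f ts₁ ts₂ t t' _ ih => exact .congr f ts₁ ts₂ t t' ih

theorem reduces_mono {R S : List (Term × Term)} (h : ∀ p ∈ R, p ∈ S) {t u : Term}
    (ht : Reduces R t u) : Reduces S t u := by
  induction ht with
  | refl => exact .refl
  | tail _ h' ih => exact ih.tail (rewrite_mono h h')

theorem reduces_congr {R : List (Term × Term)} (f : ℕ) (ts₁ ts₂ : List Term) {t t' : Term}
    (h : Reduces R t t') :
    Reduces R (.app f (ts₁ ++ t :: ts₂)) (.app f (ts₁ ++ t' :: ts₂)) := by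
  induction h with
  | refl => exact .refl
  | tail _ h' ih => exact ih.tail (.congr f ts₁ ts₂ _ _ h')

section reduces

variable {R : List (Term × Term)}

theorem reduces_ap (c : Term) {x x' : Term} (h : Reduces R x x') :
    Reduces R (tap c x) (tap c x') := reduces_congr 3 [c] [] h

theorem reduces_succ {x x' : Term} (h : Reduces R x x') :
    Reduces R (tsucc x) (tsucc x') := reduces_congr 1 [] [] h

theorem reduces_pair {x x' y y' : Term} (hx : Reduces R x x') (hy : Reduces R y y') :
    Reduces R (tpair x y) (tpair x' y') :=
  (reduces_congr 2 [] [y] hx).trans (reduces_congr 2 [x'] [] hy)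

end reduces

section rules

variable (f g x y : Term)

theorem red_zero : Reduces baseRules (tap cZero x) tz := by
  have := Rewrite.rule (R := baseRules) _ _ (listSubst [x])
    (show (tap cZero (.var 0), tz) ∈ baseRules by simp [baseRules])
  exact .single (by simpa [subst_app, listSubst] using this)

theorem red_succ : Reduces baseRules (tap cSucc x) (tsucc x) := by
  have := Rewrite.rule (R := baseRules) _ _ (listSubst [x])
    (show (tap cSucc (.var 0), tsucc (.var 0)) ∈ baseRules by simp [baseRules])
  exact .single (by simpa [subst_app, listSubst] using this)

theorem red_left : Reduces baseRules (tap cLeft (tpair x y)) x := by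
  have := Rewrite.rule (R := baseRules) _ _ (listSubst [x, y])
    (show (tap cLeft (tpair (.var 0) (.var 1)), .var 0) ∈ baseRules by simp [baseRules])
  exact .single (by simpa [subst_app, listSubst] using this)

theorem red_right : Reduces baseRules (tap cRight (tpair x y)) y := by
  have := Rewrite.rule (R := baseRules) _ _ (listSubst [x, y])
    (show (tap cRight (tpair (.var 0) (.var 1)), .var 1) ∈ baseRules by simp [baseRules])
  exact .single (by simpa [subst_app, listSubst] using this)

theorem red_pair : Reduces baseRules (tap (cPair f g) x) (tpair (tap f x) (tap g x)) := by
  have := Rewrite.rule (R := baseRules) _ _ (listSubst [f, g, x])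
    (show (tap (cPair (.var 0) (.var 1)) (.var 2),
      tpair (tap (.var 0) (.var 2)) (tap (.var 1) (.var 2))) ∈ baseRules by simp [baseRules])
  exact .single (by simpa [subst_app, listSubst] using this)

theorem red_comp : Reduces baseRules (tap (cComp f g) x) (tap f (tap g x)) := by
  have := Rewrite.rule (R := baseRules) _ _ (listSubst [f, g, x])
    (show (tap (cComp (.var 0) (.var 1)) (.var 2), tap (.var 0) (tap (.var 1) (.var 2))) ∈
      baseRules by simp [baseRules])
  exact .single (by simpa [subst_app, listSubst] using this)

theorem red_prec_zero : Reduces baseRules (tap (cPrec f g) (tpair tz x)) (tap f x) := by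
  have := Rewrite.rule (R := baseRules) _ _ (listSubst [f, g, x])
    (show (tap (cPrec (.var 0) (.var 1)) (tpair tz (.var 2)), tap (.var 0) (.var 2)) ∈
      baseRules by simp [baseRules])
  exact .single (by simpa [subst_app, listSubst] using this)

theorem red_prec_succ : Reduces baseRules (tap (cPrec f g) (tpair (tsucc y) x))
    (tap g (tpair y (tpair (tap (cPrec f g) (tpair y x)) x))) := by
  have := Rewrite.rule (R := baseRules) _ _ (listSubst [f, g, x, y])
    (show (tap (cPrec (.var 0) (.var 1)) (tpair (tsucc (.var 3)) (.var 2)),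
      tap (.var 1) (tpair (.var 3)
        (tpair (tap (cPrec (.var 0) (.var 1)) (tpair (.var 3) (.var 2))) (.var 2)))) ∈
      baseRules by simp [baseRules])
  exact .single (by simpa [subst_app, listSubst] using this)

end rules

/-- The program `c` computes the function `f` of `k` arguments, given as a tuple. -/
def Computes {k : ℕ} (c : Code) (f : List.Vector ℕ k → ℕ) : Prop :=
  ∀ v, Reduces baseRules (tap (code c) (tup v.toList)) (num (f v))

/-- The program for the `i`-th component of a tuple. -/
def proj : ℕ → Code
  | 0 => .left
  | i + 1 => .comp (proj i) .right

theorem reduces_proj (l : List ℕ) (i : ℕ) (hi : i < l.length) :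
    Reduces baseRules (tap (code (proj i)) (tup l)) (num l[i]) := by
  induction i generalizing l with
  | zero =>
    cases l with
    | nil => simp at hi
    | cons a l => exact red_left _ _
  | succ i ih =>
    cases l with
    | nil => simp at hi
    | cons a l =>
      refine (red_comp _ _ _).trans ((reduces_ap _ (red_right _ _)).trans ?_)
      exact ih l (by simpa using hi)

/-- The program that collects the results of the given programs in a tuple. -/
def tupCode : List Code → Code
  | [] => .zero
  | c :: cs => .pair c (tupCode cs)

theorem reduces_tupCode {x : Term} {cs : List Code} {ms : List ℕ}
    (h : List.Forall₂ (fun c m => Reduces baseRules (tap (code c) x) (num m)) cs ms) :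
    Reduces baseRules (tap (code (tupCode cs)) x) (tup ms) := by
  induction h with
  | nil => exact red_zero _
  | cons h _ ih => exact (red_pair _ _ _).trans (reduces_pair h ih)

/-- The interpreter evaluates every primitive recursive function. -/
theorem exists_computes {k : ℕ} {f : List.Vector ℕ k → ℕ} (hf : Nat.Primrec' f) :
    ∃ c, Computes c f := by
  induction hf with
  | zero => exact ⟨.zero, fun v => red_zero _⟩
  | succ =>
    refine ⟨.comp .succ .left, fun v => ?_⟩
    obtain ⟨a, w, rfl⟩ := v.exists_eq_cons
    exact (red_comp _ _ _).trans ((red_succ _).trans (reduces_succ (red_left _ _)))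
  | get i =>
    refine ⟨proj i, fun v => ?_⟩
    have := reduces_proj v.toList i (by simp)
    have h2 : v.get i = v.toList[(i : ℕ)]'(by simp) := by
      rw [List.Vector.get_eq_get_toList]; rfl
    change Reduces _ _ (num (v.get i))
    rwa [h2]
  | comp g _ _ ihf ihg =>
    obtain ⟨c, hc⟩ := ihf
    choose d hd using ihg
    refine ⟨.comp c (tupCode (List.ofFn d)), fun v => ?_⟩
    refine (red_comp _ _ _).trans ((reduces_ap _ (reduces_tupCode
      (ms := List.ofFn fun i => g i v) ?_)).trans ?_)
    · rw [List.forall₂_iff_get]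
      simp only [List.length_ofFn, true_and]
      intro i h1 h2
      simpa using hd ⟨i, h1⟩ v
    · have := hc (List.Vector.ofFn fun i => g i v)
      rwa [List.Vector.toList_ofFn] at this
  | prec _ _ ihf ihg =>
    obtain ⟨c, hc⟩ := ihf
    obtain ⟨d, hd⟩ := ihg
    refine ⟨.prec c d, fun v => ?_⟩
    obtain ⟨a, w, rfl⟩ := v.exists_eq_cons
    simp only [List.Vector.head_cons, List.Vector.tail_cons, List.Vector.toList_cons]
    induction a with
    | zero => exact (red_prec_zero _ _ _).trans (hc w)
    | succ a ih =>
      refine (red_prec_succ _ _ _ _).trans ((reduces_ap _ (reduces_pair .refl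
        (reduces_pair ih .refl))).trans ?_)
      exact hd (a ::ᵥ _ ::ᵥ w)

/-- Halting of the program `c` on `(n, x)` within `y` steps, as a primitive recursive function
of three arguments. -/
theorem primrec_halts (c : Code) : ∃ t : List.Vector ℕ 3 → ℕ, Primrec t ∧ ∀ n x y,
    t ⟨[n, x, y], rfl⟩ = if (Code.evaln y c (Nat.pair n x)).isSome = true then 1 else 0 := by
  have hg (i : Fin 3) : Primrec fun v : List.Vector ℕ 3 => v.get i :=
    Primrec.vector_get.comp .id (.const i)
  have h1 : Primrec fun v : List.Vector ℕ 3 =>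
      (((v.get 2, c), Nat.pair (v.get 0) (v.get 1)) : (ℕ × Code) × ℕ) :=
    Primrec.pair (Primrec.pair (hg 2) (.const c)) (Primrec₂.natPair.comp (hg 0) (hg 1))
  have h2 := Primrec.option_isSome.comp (Code.primrec_evaln.comp h1)
  exact ⟨_, Primrec.ite (Primrec.eq.comp h2 (.const true)) (.const 1) (.const 0),
    fun _ _ _ => rfl⟩

/-- The unbounded search for a witness, as the domain of a partial recursive function. -/
theorem exists_search_code (p : ℕ → ℕ → ℕ → Bool)
    (hp : Computable fun x : ℕ × ℕ × ℕ => p x.1 x.2.1 x.2.2) :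
    ∃ c : Code, ∀ n x, (∃ y, p n x y = true) ↔ (c.eval (Nat.pair n x)).Dom := by
  have hu : Computable fun x : ℕ × ℕ => (x.1.unpair.1, x.1.unpair.2, x.2) :=
    (Primrec.pair (Primrec.fst.comp (Primrec.unpair.comp .fst))
      (Primrec.pair (Primrec.snd.comp (Primrec.unpair.comp .fst)) .snd)).to_comp
  have hq : Computable₂ fun m y : ℕ => p m.unpair.1 m.unpair.2 y :=
    (hp.comp hu).of_eq fun _ => rfl
  obtain ⟨c, hc⟩ := Code.exists_code.1 (Partrec.nat_iff.1 (Partrec.rfind hq.partrec₂))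
  refine ⟨c, fun n x => ?_⟩
  rw [hc, Nat.rfind_dom]
  refine exists_congr fun y => ?_
  simp only [Nat.unpair_pair, PFun.coe_val, Part.mem_some_iff, Part.some_dom, implies_true,
    and_true]
  exact eq_comm

/-- An existentially quantified decidable predicate is decided in the limit by a program `T` that
the interpreter evaluates: `T` asks whether the search for a witness halts within `y` steps. -/
theorem exists_search (p : ℕ → ℕ → ℕ → Bool)
    (hp : Computable fun x : ℕ × ℕ × ℕ => p x.1 x.2.1 x.2.2) :
    ∃ T : Code, (∀ n x y, Reduces baseRules (tap (code T) (tup [n, x, y])) (num (tval T n x y))) ∧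
      (∀ n x, (∃ y, p n x y = true) → ∃ y₀, ∀ y ≥ y₀, tval T n x y ≠ 0) ∧
      ∀ n x, (¬ ∃ y, p n x y = true) → ∀ y, tval T n x y = 0 := by
  obtain ⟨c, hdom⟩ := exists_search_code p hp
  obtain ⟨t, ht, hev⟩ := primrec_halts c
  obtain ⟨T, hT⟩ := exists_computes (Nat.Primrec'.of_prim ht)
  have hred : ∀ n x y, Reduces baseRules (tap (code T) (tup [n, x, y]))
      (num (t ⟨[n, x, y], rfl⟩)) := fun n x y => hT ⟨[n, x, y], rfl⟩
  have hval : ∀ n x y, tval T n x y = t ⟨[n, x, y], rfl⟩ := fun n x y => by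
    have := val_reduces (reduces_mono (base_mem_rules T n) (hred n x y))
    rwa [val_num] at this
  refine ⟨T, fun n x y => by rw [hval]; exact hred n x y, fun n x h => ?_, fun n x h y => ?_⟩
  · obtain ⟨m, hm⟩ := Part.dom_iff_mem.1 ((hdom n x).1 h)
    obtain ⟨k, hk⟩ := Code.evaln_complete.1 hm
    refine ⟨k, fun y hy => ?_⟩
    rw [hval, hev, if_pos (Option.isSome_iff_exists.2 ⟨m, Code.evaln_mono hy hk⟩)]
    exact one_ne_zero
  · rw [hval, hev, if_neg]
    intro h'
    obtain ⟨m, hm⟩ := Option.isSome_iff_exists.1 h'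
    exact h ((hdom n x).2 (Part.dom_iff_mem.2 ⟨m, Code.evaln_complete.2 ⟨y, hm⟩⟩))

/-! ### The reduction -/

/-- If the search from `x` never succeeds, it is an infinite reduction. -/
theorem not_sn {T : Code} {n x : ℕ}
    (hT : ∀ y, Reduces baseRules (tap (code T) (tup [n, x, y])) tz) :
    ¬ SN (rules T n) (tgo (num x) tz tz) := by
  have hstep : ∀ y, Relation.TransGen (Rewrite (rules T n))
      (tgo (num x) (num y) tz) (tgo (num x) (num (y + 1)) tz) := fun y => by
    have h1 := Rewrite.rule (R := rules T n) _ _ (listSubst [num x, num y])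
      (show goRule T n ∈ rules T n by simp [rules])
    have h2 : Rewrite (rules T n) (tgo (num x) (num y) tz)
        (tgo (num x) (num (y + 1)) (tap (code T) (tup [n, x, y]))) := by
      simpa [subst_app, listSubst, goRule, tup] using h1
    exact .head' h2 (reduces_congr 4 [num x, num (y + 1)] []
      (reduces_mono (base_mem_rules T n) (hT y)))
  intro h
  have key : ∀ s, Acc (Relation.TransGen fun a b => Rewrite (rules T n) b a) s →
      ∀ y, s ≠ tgo (num x) (num y) tz := by
    intro s hs
    induction hs with
    | intro s _ ih =>
      rintro y rfl
      exact ih _ (hstep y).swap _ rfl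
  exact key _ (Acc.transGen h) 0 rfl

theorem wfTerm_num (n : ℕ) : WFTerm sig₀ (num n) := by
  induction n with
  | zero => exact .app (by simp [sig₀]) (by simp)
  | succ n ih => exact .app (by simp [sig₀]) (by intro t ht; rw [List.mem_singleton.1 ht]; exact ih)

theorem wfTerm_code (c : Code) : WFTerm sig₀ (code c) := by
  induction c <;> exact .app (by simp [sig₀]) (by simp [*])

theorem not_isVarOf_num (m n : ℕ) : ¬ IsVarOf m (num n) := by
  induction n with
  | zero => rintro (_ | ⟨h, -⟩); simp at h
  | succ n ih =>
    intro h
    cases h with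
    | app h h' => rw [List.mem_singleton.1 h] at h'; exact ih h'

theorem isVarOf_app {m f : ℕ} {ts : List Term} :
    IsVarOf m (.app f ts) ↔ ∃ t ∈ ts, IsVarOf m t :=
  ⟨fun h => by cases h with | app h h' => exact ⟨_, h, h'⟩, fun ⟨_, h, h'⟩ => .app h h'⟩

theorem isVarOf_var {m n : ℕ} : IsVarOf m (.var n) ↔ m = n :=
  ⟨fun h => by cases h; rfl, fun h => h ▸ .var⟩

theorem not_isVarOf_code (m : ℕ) (c : Code) : ¬ IsVarOf m (code c) := by
  induction c <;> simp [code, isVarOf_app, *]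

theorem wfTerm_app {sig : List (ℕ × ℕ)} {f : ℕ} {ts : List Term} :
    WFTerm sig (.app f ts) ↔ (f, ts.length) ∈ sig ∧ ∀ t ∈ ts, WFTerm sig t :=
  ⟨fun h => by cases h with | app h h' => exact ⟨h, h'⟩, fun ⟨h, h'⟩ => .app h h'⟩

/-- Unfolds the signature in membership statements only, so that `simp` leaves it folded in
`WFTerm sig₀`. -/
theorem mem_sig₀ {p : ℕ × ℕ} : p ∈ sig₀ ↔ p ∈ [(0, 0), (1, 1), (2, 2), (3, 2), (4, 3), (5, 0),
    (6, 0), (7, 0), (8, 0), (9, 2), (10, 2), (11, 2)] := Iff.rfl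

theorem wfTRS_rules (T : Code) (n : ℕ) : WFTRS sig₀ (rules T n) := by
  have hv : ∀ m, WFTerm sig₀ (.var m) := .var
  refine ⟨by simp [WFSig, sig₀], fun p hp => ?_⟩
  have hn := wfTerm_num n
  have hT := wfTerm_code T
  simp only [rules, baseRules, goRule, List.mem_cons, List.not_mem_nil, or_false] at hp
  rcases hp with rfl | rfl | rfl | rfl | rfl | rfl | rfl | rfl | rfl <;>
    refine ⟨?_, ?_, by simp, ?_⟩ <;>
    simp [wfTerm_app, hv, hn, hT, isVarOf_app, isVarOf_var, not_isVarOf_num, not_isVarOf_code,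
      mem_sig₀] <;> grind

theorem primrec_rules (T : Code) : Primrec (rules T) := by
  have hnum : Primrec num := by
    refine (Primrec.nat_rec (α := Unit) (f := fun _ => tz) (g := fun _ p => tsucc p.2)
      (.const _) ?_).comp (.const ()) .id
    exact primrec_app.comp (.const 1) (Primrec.list_cons.comp (Primrec.snd.comp .snd) (.const []))
  refine Primrec.list_cons.comp (Primrec.pair (.const _) ?_) (.const _)
  refine primrec_app.comp (.const 4) (Primrec.list_cons.comp (.const _)
    (Primrec.list_cons.comp (.const _) (Primrec.list_cons.comp ?_ (.const []))))
  refine primrec_app.comp (.const 3) (Primrec.list_cons.comp (.const _)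
    (Primrec.list_cons.comp ?_ (.const [])))
  exact primrec_app.comp (.const 2) (Primrec.list_cons.comp hnum (.const _))

theorem manyOneRed_snSet {B : Set ℕ} (hB : Pi02 B) : ManyOneRed B snSet := by
  obtain ⟨p, hp, hB⟩ := hB
  obtain ⟨T, hT, h1, h2⟩ := exists_search p hp
  refine ⟨fun n => Nat.pair (encodeSig sig₀) (encodeTRS (rules T n)), ?_, fun n => ?_⟩
  · refine (Primrec.of_eq (f := fun n => encode (sig₀, rules T n)) ?_
      fun n => (pair_code _ _).symm).to_comp
    exact Primrec.encode.comp (Primrec.pair (.const _) (primrec_rules T))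
  · rw [hB, mem_snSet]
    constructor
    · exact fun h => ⟨wfTRS_rules T n, fun t _ => sn_all (fun x => h1 n x (h x)) t⟩
    · rintro ⟨-, h⟩ x
      by_contra hx
      refine not_sn (T := T) (n := n) (x := x) (fun y => ?_) (h _ ?_)
      · have := hT n x y
        rwa [h2 n x hx y] at this
      · have hz := wfTerm_num 0
        have hx := wfTerm_num x
        exact .app (by simp [sig₀]) (by simpa using ⟨hx, hz⟩)

end SNPi

/-- Uniform strong normalization (on every term over the signature) of a
finite TRS is Π⁰₂-complete. -/
theorem sn_uniform_Pi02Complete :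
    Pi02Complete { n : ℕ | ∃ (sig : List (ℕ × ℕ)) (R : List (Term × Term)),
      WFTRS sig R ∧ n = Nat.pair (encodeSig sig) (encodeTRS R) ∧
      ∀ t : Term, WFTerm sig t → SNon R t } := by
  exact ⟨SNPi.pi02_snSet, fun _ => SNPi.manyOneRed_snSet⟩
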